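/- Let π be a probability measure on a measurable space Y and r : Y → ℝ a bounded measurable function. Then the function λ ↦ −λ·log(∫ exp(−r(y)/λ) dπ(y)) is nondecreasing on (0, ∞). -/

import Mathlib

open MeasureTheory

/-!
With `t = -1/λ`, the entropic risk is `cgf r π t / t`, where `cgf r π t = log ∫ exp (t * r) ∂π`.
This is the slope over `[0, t]` of a convex function vanishing at `0`, hence nondecreasing in `t`,
and `t` increases with `λ` on either side of `0`.
-/

section CumulantGeneratingFunction

open ProbabilityTheory Set

variable {Ω : Type*} [MeasurableSpace Ω] {μ : Measure Ω} {X : Ω → ℝ}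

lemma integrable_exp_mul_sub_cgf {t : ℝ} (ht : t ∈ integrableExpSet X μ) :
    Integrable (fun ω ↦ Real.exp (t * X ω - cgf X μ t)) μ := by
  simpa only [Real.exp_sub] using Integrable.div_const ht (Real.exp (cgf X μ t))

lemma integral_exp_mul_sub_cgf [NeZero μ] {t : ℝ} (ht : t ∈ integrableExpSet X μ) :
    ∫ ω, Real.exp (t * X ω - cgf X μ t) ∂μ = 1 := by
  simp only [Real.exp_sub, integral_div, exp_cgf ht]
  exact div_self (mgf_pos' (NeZero.ne μ) ht).ne'

lemma convexOn_cgf : ConvexOn ℝ (integrableExpSet X μ) (cgf X μ) := by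
  obtain rfl | hμ := eq_zero_or_neZero μ
  · rw [cgf_zero_measure]
    exact convexOn_const 0 convex_integrableExpSet
  refine ⟨convex_integrableExpSet, fun t ht u hu a b ha hb hab ↦ ?_⟩
  simp only [smul_eq_mul]
  set c := a * cgf X μ t + b * cgf X μ u
  have hv : a * t + b * u ∈ integrableExpSet X μ := convex_integrableExpSet ht hu ha hb hab
  -- Convexity of `exp`, with exponents shifted so that both exponentials on the right integrate
  -- to `1`.
  have exp_le (ω : Ω) : Real.exp ((a * t + b * u) * X ω - c) ≤
      a * Real.exp (t * X ω - cgf X μ t) + b * Real.exp (u * X ω - cgf X μ u) :=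
    calc Real.exp ((a * t + b * u) * X ω - c)
      _ = Real.exp (a * (t * X ω - cgf X μ t) + b * (u * X ω - cgf X μ u)) := by
        congr 1; ring
      _ ≤ _ := convexOn_exp.2 (mem_univ _) (mem_univ _) ha hb hab
  have ht_int := (integrable_exp_mul_sub_cgf ht).const_mul a
  have hu_int := (integrable_exp_mul_sub_cgf hu).const_mul b
  have mgf_div_le : mgf X μ (a * t + b * u) / Real.exp c ≤ 1 :=
    calc mgf X μ (a * t + b * u) / Real.exp c
      _ = ∫ ω, Real.exp ((a * t + b * u) * X ω - c) ∂μ := by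
        simp only [mgf, Real.exp_sub, integral_div]
      _ ≤ ∫ ω, (a * Real.exp (t * X ω - cgf X μ t) + b * Real.exp (u * X ω - cgf X μ u)) ∂μ :=
        integral_mono_of_nonneg (ae_of_all _ fun _ ↦ (Real.exp_pos _).le) (ht_int.add hu_int)
          (ae_of_all _ exp_le)
      _ = 1 := by
        rw [integral_add ht_int hu_int, integral_const_mul, integral_const_mul,
          integral_exp_mul_sub_cgf ht, integral_exp_mul_sub_cgf hu, mul_one, mul_one, hab]
  rwa [div_le_one (Real.exp_pos c), ← exp_cgf hv, Real.exp_le_exp] at mgf_div_le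

lemma monotoneOn_cgf_div_self [IsZeroOrProbabilityMeasure μ] :
    MonotoneOn (fun t ↦ cgf X μ t / t) (integrableExpSet X μ \ {0}) := by
  have zero_mem : 0 ∈ integrableExpSet X μ := by simp [integrableExpSet]
  simpa only [slope_fun_def_field, cgf_zero, sub_zero] using convexOn_cgf.slope_mono zero_mem

lemma neg_div_eq_neg_inv_mul {K : Type*} [Field K] (x l : K) : -x / l = -l⁻¹ * x := by ring

lemma neg_mul_log_integral_exp_neg_div (X : Ω → ℝ) (μ : Measure Ω) (l : ℝ) :
    -l * Real.log (∫ ω, Real.exp (-X ω / l) ∂μ) = cgf X μ (-l⁻¹) / -l⁻¹ := by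
  simp only [cgf, mgf, neg_div_eq_neg_inv_mul, div_neg, div_inv_eq_mul]
  ring

lemma neg_inv_mem_integrableExpSet_iff {l : ℝ} :
    -l⁻¹ ∈ integrableExpSet X μ ↔ Integrable (fun ω ↦ Real.exp (-X ω / l)) μ := by
  simp only [integrableExpSet, mem_ofPred_eq, neg_div_eq_neg_inv_mul]

lemma integrable_exp_neg_div_of_abs_le [IsFiniteMeasure μ] {C : ℝ} (hX : AEMeasurable X μ)
    (hC : ∀ᵐ ω ∂μ, |X ω| ≤ C) (l : ℝ) : Integrable (fun ω ↦ Real.exp (-X ω / l)) μ :=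
  neg_inv_mem_integrableExpSet_iff.1 <|
    integrable_exp_mul_of_mem_Icc hX (hC.mono fun _ ↦ abs_le.1)

end CumulantGeneratingFunction

lemma monotoneOn_neg_inv {K : Type*} [Field K] [LinearOrder K] [IsStrictOrderedRing K] {s : Set K}
    (hs : s ⊆ Set.Ioi 0 ∨ s ⊆ Set.Iio 0) : MonotoneOn (fun x ↦ -x⁻¹) s := by
  intro x hx y hy hxy
  rcases hs with hs | hs
  · exact neg_le_neg (inv_anti₀ (hs hx) hxy)
  · exact neg_le_neg ((inv_le_inv_of_neg (hs hy) (hs hx)).2 hxy)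

theorem entropic_risk_monotone_in_lambda_general
    {Y : Type*} [MeasurableSpace Y]
    (π : Measure Y) [IsProbabilityMeasure π]
    (r : Y → ℝ) {s : Set ℝ} (hs : s ⊆ Set.Ioi 0 ∨ s ⊆ Set.Iio 0)
    (h_int : ∀ lam ∈ s, Integrable (fun y ↦ Real.exp (-r y / lam)) π) :
    MonotoneOn (fun lam : ℝ => -lam * Real.log (∫ y, Real.exp (-r y / lam) ∂π)) s := by
  simp only [neg_mul_log_integral_exp_neg_div]
  refine monotoneOn_cgf_div_self.comp (monotoneOn_neg_inv hs) fun lam hlam ↦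
    ⟨neg_inv_mem_integrableExpSet_iff.2 (h_int lam hlam), ?_⟩
  have lam_ne_zero : lam ≠ 0 := hs.elim (fun h ↦ (h hlam).ne') (fun h ↦ (h hlam).ne)
  simpa using lam_ne_zero

/-- **Remark 2 (monotonicity): smaller `λ` is more risk-averse.** For a probability measure
`π` and bounded measurable `r`, the entropic risk `λ ↦ −λ·log ∫ exp(−r/λ) dπ` is
nondecreasing on `(0, ∞)`. -/
theorem entropic_risk_monotone_in_lambda
    {Y : Type*} [MeasurableSpace Y]
    (π : Measure Y) [IsProbabilityMeasure π]
    (r : Y → ℝ) (hr_meas : Measurable r) (hr_bdd : ∃ C : ℝ, ∀ y, |r y| ≤ C) :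
    MonotoneOn (fun lam : ℝ => -lam * Real.log (∫ y, Real.exp (-r y / lam) ∂π))
      (Set.Ioi (0 : ℝ)) := by
  obtain ⟨C, hC⟩ := hr_bdd
  exact entropic_risk_monotone_in_lambda_general π r (.inl subset_rfl) fun lam _ ↦
    integrable_exp_neg_div_of_abs_le hr_meas.aemeasurable (ae_of_all π hC) lam
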